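/- With g(n) := 1 + E[X_n] (and g(0) = g(1) = 1), the generating function G_p(x) = Σ_{n≥0} g(n)x^n satisfies G_p(x) = 1 + x / ((1-x)^2 B_p(x)), where B_p(x) = Σ_{n≥0} (1-p)^{C(n+1,2)} x^n. -/

import Mathlib

open Finset Filter

noncomputable section

/-- The weight of a path, given as a list of vertices. -/
def pathWeight (wt : ℕ → ℕ → ℕ) (l : List ℕ) : ℕ :=
  ((l.zip l.tail).map fun e => wt e.1 e.2).sum

/-- `l` is a directed path from `a` to `b` in the transitive tournament on `ℕ`. -/
def IsPath (a b : ℕ) (l : List ℕ) : Prop :=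
  l.Chain' (· < ·) ∧ l.head? = some a ∧ l.getLast? = some b

/-- `maxW wt a b` is the maximum weight of a directed path from `a` to `b`. -/
def maxW (wt : ℕ → ℕ → ℕ) (a b : ℕ) : ℕ :=
  sSup {m | ∃ l, IsPath a b l ∧ pathWeight wt l = m}

/-- The edges of the transitive tournament on `n` vertices. -/
abbrev Edge (n : ℕ) := {e : Fin n × Fin n // (e.1 : ℕ) < (e.2 : ℕ)}

/-- The sample space: an assignment of a `0/1` weight (a `Bool`) to each edge. -/
abbrev Omega (n : ℕ) := Edge n → Bool

/-- The weight function on vertices `1, …, n` induced by an outcome `w`. -/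
def wtOf {n : ℕ} (w : Omega n) (a b : ℕ) : ℕ :=
  if h : 1 ≤ a ∧ a < b ∧ b ≤ n then
    (if w ⟨(⟨a - 1, by omega⟩, ⟨b - 1, by omega⟩), by show a - 1 < b - 1; omega⟩
      then 1 else 0)
  else 0

/-- The probability of outcome `w`: each edge independently has weight 1
with probability `p` and weight 0 with probability `1 - p`. -/
def prob (p : ℝ) {n : ℕ} (w : Omega n) : ℝ :=
  ∏ e : Edge n, (if w e then p else 1 - p)

/-- `X n w` : the maximum weight of a directed path from vertex `1` to vertex `n`. -/
def X (n : ℕ) (w : Omega n) : ℕ := maxW (wtOf w) 1 n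

/-- The expectation of `X n` under i.i.d. Bernoulli(p) edge weights. -/
def EX (p : ℝ) (n : ℕ) : ℝ := ∑ w : Omega n, prob p w * (X n w : ℝ)


/-- `A_p(x) = Σ_{n≥0} (1-p)^{C(n,2)} x^n` as a formal power series over `ℝ`. -/
noncomputable def Aps (p : ℝ) : PowerSeries ℝ :=
  PowerSeries.mk fun n => (1 - p) ^ (n.choose 2)

/-- `B_p(x) = Σ_{n≥0} (1-p)^{C(n+1,2)} x^n` as a formal power series over `ℝ`. -/
noncomputable def Bps (p : ℝ) : PowerSeries ℝ :=
  PowerSeries.mk fun n => (1 - p) ^ ((n + 1).choose 2)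


open Classical in
def stt (wt : ℕ → ℕ → ℕ) : ℕ → ℕ
  | 0 => 1
  | m + 1 => if ∃ u, stt wt m ≤ u ∧ u ≤ m + 1 ∧ wt u (m + 2) ≠ 0 then m + 2 else stt wt m

def isR (wt : ℕ → ℕ → ℕ) (m : ℕ) : Prop :=
  ∃ u, stt wt m ≤ u ∧ u ≤ m + 1 ∧ wt u (m + 2) ≠ 0

open Classical in
def cntt (wt : ℕ → ℕ → ℕ) : ℕ → ℕ
  | 0 => 0
  | m + 1 => cntt wt m + if isR wt m then 1 else 0

lemma stt_pos {wt : ℕ → ℕ → ℕ} {m : ℕ} (h : isR wt m) : stt wt (m + 1) = m + 2 := by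
  unfold isR at h
  simp only [stt]
  rw [if_pos h]

lemma stt_neg {wt : ℕ → ℕ → ℕ} {m : ℕ} (h : ¬ isR wt m) : stt wt (m + 1) = stt wt m := by
  unfold isR at h
  simp only [stt]
  rw [if_neg h]

lemma cntt_pos {wt : ℕ → ℕ → ℕ} {m : ℕ} (h : isR wt m) : cntt wt (m + 1) = cntt wt m + 1 := by
  simp [cntt, h]

lemma cntt_neg {wt : ℕ → ℕ → ℕ} {m : ℕ} (h : ¬ isR wt m) : cntt wt (m + 1) = cntt wt m := by
  simp [cntt, h]

lemma stt_bd (wt : ℕ → ℕ → ℕ) (m : ℕ) : 1 ≤ stt wt m ∧ stt wt m ≤ m + 1 := by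
  induction m with
  | zero => simp [stt]
  | succ m ih =>
    by_cases h : isR wt m
    · rw [stt_pos h]; omega
    · rw [stt_neg h]; omega

lemma isR_iff (wt : ℕ → ℕ → ℕ) (m : ℕ) : isR wt m ↔ stt wt (m + 1) = m + 2 := by
  refine ⟨stt_pos, fun h => ?_⟩
  by_contra hn
  rw [stt_neg hn] at h
  have := stt_bd wt m
  omega

lemma cntt_mono (wt : ℕ → ℕ → ℕ) : Monotone (cntt wt) :=
  monotone_nat_of_le_succ fun m => by simp [cntt]

lemma cntt_lt (wt : ℕ → ℕ → ℕ) (m u : ℕ) (hu : u + 1 < stt wt m) : cntt wt u + 1 ≤ cntt wt m := by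
  induction m with
  | zero => simp [stt] at hu
  | succ m ih =>
    by_cases h : isR wt m
    · rw [stt_pos h] at hu
      rw [cntt_pos h]
      have := cntt_mono wt (show u ≤ m by omega)
      omega
    · rw [stt_neg h] at hu
      rw [cntt_neg h]
      exact ih hu

lemma cntt_edge (wt : ℕ → ℕ → ℕ) (h1 : ∀ a b, wt a b ≤ 1) (u v : ℕ) (huv : u < v) :
    cntt wt u + wt (u + 1) (v + 1) ≤ cntt wt v := by
  obtain ⟨m, rfl⟩ : ∃ m, v = m + 1 := ⟨v - 1, by omega⟩
  have hm := cntt_mono wt (show u ≤ m by omega)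
  have hm' := cntt_mono wt (show m ≤ m + 1 by omega)
  by_cases h0 : wt (u + 1) (m + 1 + 1) = 0
  · omega
  have := h1 (u + 1) (m + 1 + 1)
  by_cases hs : stt wt m ≤ u + 1
  · rw [cntt_pos ⟨u + 1, hs, by omega, h0⟩]
    omega
  · have := cntt_lt wt m u (by omega)
    omega

lemma pw_cons (wt : ℕ → ℕ → ℕ) (a b : ℕ) (l : List ℕ) :
    pathWeight wt (a :: b :: l) = wt a b + pathWeight wt (b :: l) := by
  simp [pathWeight]

lemma path_le (wt : ℕ → ℕ → ℕ) (h1 : ∀ a b, wt a b ≤ 1) (l : List ℕ) :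
    ∀ a b, IsPath (a + 1) b l → ∃ b', b = b' + 1 ∧ cntt wt a + pathWeight wt l ≤ cntt wt b' := by
  induction l with
  | nil => intro a b h; simp [IsPath] at h
  | cons x l ih =>
    intro a b h
    cases l with
    | nil =>
      simp [IsPath] at h
      refine ⟨a, by omega, by simp [pathWeight]⟩
    | cons y l =>
      obtain ⟨hc, hh, hl⟩ := h
      simp at hh
      subst hh
      have hc' := List.isChain_cons_cons.1 hc
      obtain ⟨y', rfl⟩ : ∃ y', y = y' + 1 := ⟨y - 1, by omega⟩
      obtain ⟨b', hb, hle⟩ := ih y' b ⟨hc'.2, by simp, by simpa using hl⟩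
      refine ⟨b', hb, ?_⟩
      rw [pw_cons]
      have := cntt_edge wt h1 a y' (by omega)
      omega

lemma path_snoc (wt : ℕ → ℕ → ℕ) (l : List ℕ) (c : ℕ) : ∀ a b, b < c → IsPath a b l →
    IsPath a c (l ++ [c]) ∧ pathWeight wt (l ++ [c]) = pathWeight wt l + wt b c := by
  induction l with
  | nil => intro a b hb h; simp [IsPath] at h
  | cons x l ih =>
    intro a b hb h
    cases l with
    | nil =>
      simp [IsPath] at h
      obtain ⟨-, rfl, rfl⟩ := h
      refine ⟨⟨List.isChain_pair.2 hb, by simp, by simp⟩, by simp [pathWeight]⟩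
    | cons y l =>
      obtain ⟨hc, hh, hl⟩ := h
      simp at hh
      subst hh
      have hc' := List.isChain_cons_cons.1 hc
      obtain ⟨⟨h3, h4, h5⟩, h6⟩ := ih y b hb ⟨hc'.2, by simp, by simpa using hl⟩
      refine ⟨⟨List.isChain_cons_cons.2 ⟨hc'.1, h3⟩, by simp, by
        rw [List.getLast?_append]; simp⟩, ?_⟩
      rw [List.cons_append, List.cons_append, pw_cons, pw_cons, ← List.cons_append, h6]
      omega

lemma path_ext (wt : ℕ → ℕ → ℕ) (l : List ℕ) (a b c : ℕ) (h : b ≤ c) (hl : IsPath a b l) :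
    ∃ l', IsPath a c l' ∧ pathWeight wt l ≤ pathWeight wt l' := by
  rcases h.eq_or_lt with rfl | h
  · exact ⟨l, hl, le_rfl⟩
  · obtain ⟨h3, h4⟩ := path_snoc wt l c a b h hl
    exact ⟨_, h3, by omega⟩

lemma path_ex (wt : ℕ → ℕ → ℕ) (m : ℕ) :
    ∃ l, IsPath 1 (stt wt m) l ∧ cntt wt m ≤ pathWeight wt l := by
  induction m with
  | zero => exact ⟨[1], ⟨List.isChain_singleton _, by simp, by simp [stt]⟩, by simp [cntt]⟩
  | succ m ih =>
    obtain ⟨l, hl, hw⟩ := ih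
    by_cases h : isR wt m
    · rw [stt_pos h, cntt_pos h]
      obtain ⟨u, hu1, hu2, hu3⟩ := h
      obtain ⟨l', hl', hw'⟩ := path_ext wt l _ _ u hu1 hl
      obtain ⟨h3, h4⟩ := path_snoc wt l' (m + 2) _ _ (by omega) hl'
      exact ⟨_, h3, by omega⟩
    · rw [stt_neg h, cntt_neg h]
      exact ⟨l, hl, hw⟩

lemma maxW_eq (wt : ℕ → ℕ → ℕ) (h1 : ∀ a b, wt a b ≤ 1) (m : ℕ) :
    maxW wt 1 (m + 1) = cntt wt m := by
  have hub : ∀ k ∈ {k | ∃ l, IsPath 1 (m + 1) l ∧ pathWeight wt l = k}, k ≤ cntt wt m := by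
    rintro k ⟨l, hl, rfl⟩
    obtain ⟨b', hb, h⟩ := path_le wt h1 l 0 (m + 1) hl
    obtain rfl : m = b' := by omega
    omega
  obtain ⟨l, hl, hw⟩ := path_ex wt m
  obtain ⟨l', hl', hw'⟩ := path_ext wt l _ _ (m + 1) (stt_bd wt m).2 hl
  unfold maxW
  apply le_antisymm
  · exact csSup_le ⟨_, l', hl', rfl⟩ hub
  · exact (hw.trans hw').trans (le_csSup ⟨_, hub⟩ ⟨l', hl', rfl⟩)

lemma congr_aux (wt wt' : ℕ → ℕ → ℕ) (m : ℕ)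
    (h : ∀ u v, 1 ≤ u → u < v → v ≤ m + 1 → wt u v = wt' u v) :
    stt wt m = stt wt' m ∧ cntt wt m = cntt wt' m := by
  induction m with
  | zero => simp [stt, cntt]
  | succ m ih =>
    obtain ⟨h1, h2⟩ := ih fun u v a b c => h u v a b (by omega)
    have hR : isR wt m ↔ isR wt' m := by
      unfold isR
      rw [← h1]
      have := (stt_bd wt m).1
      constructor
      · rintro ⟨u, a, b, c⟩
        exact ⟨u, a, b, by rwa [← h u (m + 2) (by omega) (by omega) (by omega)]⟩
      · rintro ⟨u, a, b, c⟩
        exact ⟨u, a, b, by rwa [h u (m + 2) (by omega) (by omega) (by omega)]⟩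
    by_cases hr : isR wt m
    · rw [stt_pos hr, stt_pos (hR.1 hr), cntt_pos hr, cntt_pos (hR.1 hr)]
      exact ⟨rfl, by omega⟩
    · rw [stt_neg hr, stt_neg (mt hR.2 hr), cntt_neg hr, cntt_neg (mt hR.2 hr)]
      exact ⟨h1, h2⟩

lemma wtOf_le {n : ℕ} (w : Omega n) (a b : ℕ) : wtOf w a b ≤ 1 := by
  unfold wtOf
  split_ifs <;> omega

def edgeEquiv (n : ℕ) : Edge n ⊕ Fin n ≃ Edge (n + 1) where
  toFun := Sum.elim (fun e => ⟨(e.1.1.castSucc, e.1.2.castSucc), e.2⟩)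
    (fun i => ⟨(i.castSucc, Fin.last n), by simp⟩)
  invFun e := if h : (e.1.2 : ℕ) < n then
      Sum.inl ⟨(⟨e.1.1, e.2.trans h⟩, ⟨e.1.2, h⟩), e.2⟩
    else Sum.inr ⟨e.1.1, by have := e.2; have := e.1.2.2; omega⟩
  left_inv := by
    rintro (⟨⟨a, b⟩, h⟩ | i)
    · simp
    · simp
  right_inv := by
    rintro ⟨⟨a, b⟩, h⟩
    by_cases hb : (b : ℕ) < n
    · simp [hb]
    · simp only [hb, dite_false, Sum.elim_inr]
      apply Subtype.ext
      refine Prod.ext (Fin.ext rfl) (Fin.ext ?_)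
      have := b.2
      simp
      omega

def omEquiv (n : ℕ) : Omega n × (Fin n → Bool) ≃ Omega (n + 1) :=
  (Equiv.sumArrowEquivProdArrow _ _ _).symm.trans (Equiv.arrowCongr (edgeEquiv n) (Equiv.refl _))

lemma om_inl (n : ℕ) (x : Omega n × (Fin n → Bool)) (e : Edge n) :
    omEquiv n x (edgeEquiv n (Sum.inl e)) = x.1 e := by
  simp [omEquiv, Equiv.sumArrowEquivProdArrow]

lemma om_inr (n : ℕ) (x : Omega n × (Fin n → Bool)) (i : Fin n) :
    omEquiv n x (edgeEquiv n (Sum.inr i)) = x.2 i := by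
  simp [omEquiv, Equiv.sumArrowEquivProdArrow]

def bp (p : ℝ) {n : ℕ} (b : Fin n → Bool) : ℝ := ∏ i, (if b i then p else 1 - p)

lemma prob_om (p : ℝ) (n : ℕ) (x : Omega n × (Fin n → Bool)) :
    prob p (omEquiv n x) = prob p x.1 * bp p x.2 := by
  unfold prob bp
  rw [← (edgeEquiv n).prod_comp, Fintype.prod_sum_type]
  simp only [om_inl, om_inr]

lemma wt_old (n : ℕ) (x : Omega n × (Fin n → Bool)) (u v : ℕ) (h1 : 1 ≤ u) (h2 : u < v)
    (h3 : v ≤ n) : wtOf (omEquiv n x) u v = wtOf x.1 u v := by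
  unfold wtOf
  rw [dif_pos ⟨h1, h2, by omega⟩, dif_pos ⟨h1, h2, h3⟩, ← om_inl]
  rfl

lemma wt_new (n : ℕ) (x : Omega n × (Fin n → Bool)) (u : ℕ) (h1 : 1 ≤ u) (h2 : u ≤ n) :
    wtOf (omEquiv n x) u (n + 1) = if x.2 ⟨u - 1, by omega⟩ then 1 else 0 := by
  unfold wtOf
  rw [dif_pos ⟨h1, by omega, by omega⟩, ← om_inr]
  rfl

lemma bern (p : ℝ) (n : ℕ) (S : Finset (Fin n)) :
    ∑ b : Fin n → Bool, bp p b * (if ∀ i ∈ S, b i = false then 1 else 0) = (1 - p) ^ S.card := by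
  have h : ∀ b : Fin n → Bool, bp p b * (if ∀ i ∈ S, b i = false then 1 else 0) =
      ∏ i, (if b i then (if i ∈ S then 0 else p) else 1 - p) := by
    intro b
    unfold bp
    split_ifs with hb
    · rw [mul_one]
      refine Finset.prod_congr rfl fun i _ => ?_
      by_cases hi : i ∈ S
      · simp [hb i hi]
      · simp [hi]
    · push Not at hb
      obtain ⟨i, hi, hbi⟩ := hb
      rw [mul_zero]
      symm
      apply Finset.prod_eq_zero (Finset.mem_univ i)
      simp [hi, hbi]
  simp_rw [h]
  have := Finset.prod_univ_sum (fun _ : Fin n => (Finset.univ : Finset Bool))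
    (fun i b => if b then (if i ∈ S then 0 else p) else 1 - p)
  rw [Fintype.piFinset_univ] at this
  rw [← this]
  have h2 : ∀ i : Fin n, (∑ b : Bool, if b then (if i ∈ S then 0 else p) else 1 - p) =
      if i ∈ S then 1 - p else 1 := by
    intro i
    by_cases hi : i ∈ S <;> simp [hi]
  simp_rw [h2]
  rw [Finset.prod_ite_mem]
  simp

def Qq (p : ℝ) (n s : ℕ) : ℝ :=
  ∑ w : Omega (n + 1), prob p w * (if stt (wtOf w) n = s then 1 else 0)

lemma sum_om (n : ℕ) (F : Omega (n + 1) → ℝ) :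
    ∑ w, F w = ∑ w : Omega n, ∑ b : Fin n → Bool, F (omEquiv n (w, b)) := by
  rw [← (omEquiv n).sum_comp, Fintype.sum_prod_type]

lemma bp_sum (p : ℝ) (n : ℕ) : ∑ b : Fin n → Bool, bp p b = 1 := by
  simpa using bern p n ∅

lemma prob_sum (p : ℝ) (n : ℕ) : ∑ w : Omega n, prob p w = 1 := by
  induction n with
  | zero => simp [prob]
  | succ n ih =>
    rw [sum_om]
    simp_rw [prob_om, ← Finset.mul_sum, bp_sum, mul_one, ih]

lemma om_stt (n : ℕ) (x : Omega (n + 1) × (Fin (n + 1) → Bool)) :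
    stt (wtOf (omEquiv (n + 1) x)) n = stt (wtOf x.1) n ∧
    cntt (wtOf (omEquiv (n + 1) x)) n = cntt (wtOf x.1) n :=
  congr_aux _ _ _ fun u v a b c => wt_old _ _ _ _ a b c

lemma om_isR (n : ℕ) (x : Omega (n + 1) × (Fin (n + 1) → Bool)) :
    ¬ isR (wtOf (omEquiv (n + 1) x)) n ↔
      ∀ i ∈ Finset.univ.filter (fun i : Fin (n + 1) => stt (wtOf x.1) n ≤ i + 1), x.2 i = false := by
  unfold isR
  rw [(om_stt n x).1]
  have hb := (stt_bd (wtOf x.1) n).1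
  constructor
  · intro h i hi
    simp at hi
    by_contra hx
    apply h
    refine ⟨i + 1, hi, by omega, ?_⟩
    rw [wt_new _ _ _ (by omega) (by omega)]
    simpa using hx
  · rintro h ⟨u, h1, h2, h3⟩
    rw [wt_new _ _ _ (by omega) (by omega)] at h3
    rw [h ⟨u - 1, by omega⟩ (by simp; omega)] at h3
    simp at h3

lemma card_aux (n s : ℕ) (h1 : 1 ≤ s) (h : s ≤ n + 1) :
    (Finset.univ.filter (fun i : Fin (n + 1) => s ≤ i + 1)).card = n + 2 - s := by
  have : (Finset.univ.filter (fun i : Fin (n + 1) => s ≤ i + 1)) =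
      Finset.Ici (⟨s - 1, by omega⟩ : Fin (n + 1)) := by
    ext i
    simp [Fin.le_def]
  rw [this, Fin.card_Ici]
  simp
  omega

lemma Qq_step (p : ℝ) (n s : ℕ) (h1 : 1 ≤ s) (hs : s ≤ n + 1) :
    Qq p (n + 1) s = (1 - p) ^ (n + 2 - s) * Qq p n s := by
  unfold Qq
  rw [sum_om, Finset.mul_sum]
  refine Finset.sum_congr rfl fun w _ => ?_
  by_cases hw : stt (wtOf w) n = s
  · rw [if_pos hw]
    rw [← card_aux n s h1 hs, ← bern, Finset.sum_mul]
    refine Finset.sum_congr rfl fun b _ => ?_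
    rw [prob_om]
    have key := om_isR n (w, b)
    simp only [hw] at key
    have h2 := (om_stt n (w, b)).1
    by_cases hr : isR (wtOf (omEquiv (n + 1) (w, b))) n
    · rw [stt_pos hr, if_neg (by omega), if_neg (fun h => key.2 h hr)]
      ring
    · rw [stt_neg hr, h2, if_pos hw, if_pos (key.1 hr)]
      ring
  · rw [if_neg hw]
    simp only [mul_zero]
    refine Finset.sum_eq_zero fun b _ => ?_
    have h2 := (om_stt n (w, b)).1
    by_cases hr : isR (wtOf (omEquiv (n + 1) (w, b))) n
    · rw [stt_pos hr, if_neg (by omega), mul_zero]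
    · rw [stt_neg hr, h2, if_neg hw, mul_zero]

def rr (p : ℝ) (j : ℕ) : ℝ := Qq p j (j + 1)

lemma Qq_eq (p : ℝ) (j k : ℕ) : Qq p (j + k) (j + 1) = (1 - p) ^ ((k + 1).choose 2) * rr p j := by
  induction k with
  | zero => simp [rr]
  | succ k ih =>
    rw [← add_assoc, Qq_step _ _ _ (by omega) (by omega), ih, ← mul_assoc, ← pow_add]
    congr 2
    rw [Nat.choose_succ_succ' (k + 1) 1]
    simp
    omega

lemma Qq_sum (p : ℝ) (n : ℕ) : ∑ j ∈ Finset.range (n + 1), Qq p n (j + 1) = 1 := by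
  unfold Qq
  rw [Finset.sum_comm]
  refine Eq.trans ?_ (prob_sum p (n + 1))
  refine Finset.sum_congr rfl fun w _ => ?_
  have := stt_bd (wtOf w) n
  rw [← Finset.mul_sum, Finset.sum_eq_single (stt (wtOf w) n - 1)]
  · rw [if_pos (by omega), mul_one]
  · intro b _ hb
    rw [if_neg (by omega)]
  · intro h
    simp at h
    omega

lemma EX_cnt (p : ℝ) (n : ℕ) :
    EX p (n + 1) = ∑ w : Omega (n + 1), prob p w * (cntt (wtOf w) n : ℝ) := by
  unfold EX X
  simp_rw [maxW_eq _ (wtOf_le _)]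

lemma EX_zero (p : ℝ) : EX p 0 = 0 := by
  have : ∀ w : Omega 0, X 0 w = 0 := by
    intro w
    unfold X maxW
    have : {m | ∃ l, IsPath 1 0 l ∧ pathWeight (wtOf w) l = m} = ∅ := by
      ext m
      simp only [Set.mem_setOf_eq, Set.mem_empty_iff_false, iff_false]
      rintro ⟨l, hl, -⟩
      obtain ⟨b, hb, -⟩ := path_le _ (wtOf_le w) l 0 0 hl
      omega
    rw [this]
    simp
  simp [EX, this]

lemma EX_step (p : ℝ) (n : ℕ) : EX p (n + 2) = EX p (n + 1) + rr p (n + 1) := by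
  rw [EX_cnt, EX_cnt]
  have h : ∑ w : Omega (n + 1), prob p w * (cntt (wtOf w) n : ℝ) =
      ∑ w : Omega (n + 1 + 1), prob p w * (cntt (wtOf w) n : ℝ) := by
    rw [sum_om (n + 1)]
    refine Finset.sum_congr rfl fun w _ => ?_
    have : ∀ b, prob p (omEquiv (n + 1) (w, b)) * (cntt (wtOf (omEquiv (n + 1) (w, b))) n : ℝ)
        = bp p b * (prob p w * (cntt (wtOf w) n : ℝ)) := by
      intro b
      rw [prob_om, (om_stt n (w, b)).2]
      ring
    simp_rw [this, ← Finset.sum_mul, bp_sum, one_mul]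
  rw [h, rr, Qq, ← Finset.sum_add_distrib]
  refine Finset.sum_congr rfl fun w _ => ?_
  rw [← mul_add]
  congr 1
  by_cases hr : isR (wtOf w) n
  · rw [cntt_pos hr, stt_pos hr]; simp
  · rw [cntt_neg hr, if_neg (fun h => hr ((isR_iff _ _).2 h))]; simp

lemma rr_zero (p : ℝ) : rr p 0 = 1 := by
  simpa [rr] using Qq_sum p 0

lemma EX_sum (p : ℝ) (n : ℕ) : 1 + EX p (n + 1) = ∑ j ∈ Finset.range (n + 1), rr p j := by
  induction n with
  | zero => simp [EX_cnt, cntt, rr_zero]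
  | succ n ih => rw [Finset.sum_range_succ, ← ih, EX_step]; ring

lemma RB (p : ℝ) : PowerSeries.mk (rr p) * Bps p = PowerSeries.mk 1 := by
  ext n
  rw [PowerSeries.coeff_mul, Finset.Nat.sum_antidiagonal_eq_sum_range_succ_mk]
  simp only [Bps, PowerSeries.coeff_mk, Pi.one_apply]
  refine Eq.trans ?_ (Qq_sum p n)
  refine Finset.sum_congr rfl fun j hj => ?_
  simp at hj
  obtain ⟨k, rfl⟩ : ∃ k, n = j + k := ⟨n - j, by omega⟩
  rw [Qq_eq, mul_comm]
  simp

lemma GR (p : ℝ) : PowerSeries.mk (fun n => 1 + EX p (n + 1)) =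
    PowerSeries.mk (rr p) * PowerSeries.mk 1 := by
  ext n
  rw [PowerSeries.coeff_mul, Finset.Nat.sum_antidiagonal_eq_sum_range_succ_mk]
  simp [EX_sum]

/-- the generating function of `g(n) = 1 + E[X_n]` is
`1 + x/((1-x)² B_p(x))`. -/
theorem stmt5 (p : ℝ) (hp : p ∈ Set.Ioo (0 : ℝ) 1) :
    PowerSeries.mk (fun n => 1 + EX p n) =
      1 + PowerSeries.X * ((1 - PowerSeries.X) ^ 2 * Bps p)⁻¹ := by
  have h1 : PowerSeries.mk (fun n => 1 + EX p n) =
      1 + PowerSeries.X * PowerSeries.mk (fun n => 1 + EX p (n + 1)) := by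
    ext n
    cases n with
    | zero => simp [EX_zero]
    | succ n =>
      rw [map_add, PowerSeries.coeff_succ_X_mul]
      simp [PowerSeries.coeff_one]
  rw [h1]
  congr 2
  rw [PowerSeries.eq_inv_iff_mul_eq_one, GR]
  · have h2 : PowerSeries.mk 1 * (1 - PowerSeries.X) = (1 : PowerSeries ℝ) :=
      PowerSeries.mk_one_mul_one_sub_eq_one ℝ
    calc _ = (PowerSeries.mk (rr p) * Bps p) * (1 - PowerSeries.X) *
          (PowerSeries.mk 1 * (1 - PowerSeries.X)) := by ring
      _ = 1 := by rw [RB, h2, mul_one]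
  · have h3 : PowerSeries.constantCoeff (Bps p) = 1 := by
      rw [← PowerSeries.coeff_zero_eq_constantCoeff_apply, Bps, PowerSeries.coeff_mk]
      simp
    simp [h3]

end
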